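/- Let (X_t) be the Gibbs sampler on M_n started from a fixed x ∈ M_n, driven by i.i.d. uniform update pairs (i_s, j_s) with 1 ≤ i_s < j_s ≤ n and independent uniform variables λ_s ∈ [0,1]. Let τ be the first time t such that every index in {1,…,n} occurs in some pair (i_s, j_s) with s < t. Then for every t ≥ 0, ‖L(X_t) − U_n‖_TV ≥ P[τ > t]. -/

import Mathlib

open MeasureTheory

noncomputable section

/-- Uniform probability measure on a finset. -/
def unifOn {α : Type*} [MeasurableSpace α] (s : Finset α) : Measure α :=
  (s.card : ENNReal)⁻¹ • ∑ a ∈ s, Measure.dirac a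

/-- Total variation distance between two measures. -/
def tvDist {α : Type*} [MeasurableSpace α] (μ ν : Measure α) : ℝ :=
  ⨆ A : {A : Set α // MeasurableSet A}, ((μ A).toReal - (ν A).toReal)

/-- The set `M_n` of nonnegative `n × 2` matrices with row sums `2` and column sums `n`. -/
def MSet (n : ℕ) : Set (Fin n × Fin 2 → ℝ) :=
  {x | (∀ p, 0 ≤ x p) ∧ (∀ i : Fin n, x (i, 0) + x (i, 1) = 2) ∧
    (∀ j : Fin 2, ∑ i : Fin n, x (i, j) = n)}

/-- The uniform (normalized `(n-1)`-dimensional Hausdorff) measure on `M_n`. -/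
def UM (n : ℕ) : Measure (Fin n × Fin 2 → ℝ) :=
  (μH[(n : ℝ) - 1] (MSet n))⁻¹ • (μH[(n : ℝ) - 1]).restrict (MSet n)

/-- One step of the Gibbs sampler on `M_n`, updating the pair of rows `u.1 = (i, j)`
using the uniform variable `u.2 = λ`. -/
def stepM (n : ℕ) (x : Fin n × Fin 2 → ℝ) (u : (Fin n × Fin n) × ℝ) :
    Fin n × Fin 2 → ℝ := fun p =>
  let i := u.1.1
  let j := u.1.2
  let l := u.2
  let d := 2 - x (i, 0) - x (j, 0)
  if p = (i, 0) then (if 0 ≤ d then l * (2 - d) else 2 * l - (1 - l) * d)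
  else if p = (j, 0) then (if 0 ≤ d then (1 - l) * (2 - d) else 2 * (1 - l) - l * d)
  else if p = (i, 1) then (if 0 ≤ d then 2 * (1 - l) + l * d else (1 - l) * (2 + d))
  else if p = (j, 1) then (if 0 ≤ d then 2 * l + (1 - l) * d else l * (2 + d))
  else x p

/-- The set of ordered pairs `(i, j)` with `i < j`. -/
def pairsF (n : ℕ) : Finset (Fin n × Fin n) := Finset.univ.filter fun p => p.1 < p.2

/-- Law of the random update datum: `(i, j)` uniform among pairs `i < j`, and
`λ` uniform on `[0,1]`. -/
def driveM (n : ℕ) : Measure ((Fin n × Fin n) × ℝ) :=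
  (unifOn (pairsF n)).prod ((volume : Measure ℝ).restrict (Set.Icc 0 1))

/-- Law of the Gibbs sampler on `M_n` after `T` steps started at `x`. -/
def lawM (n : ℕ) (x : Fin n × Fin 2 → ℝ) (T : ℕ) : Measure (Fin n × Fin 2 → ℝ) :=
  Measure.map (fun ω : Fin T → (Fin n × Fin n) × ℝ => (List.ofFn ω).foldl (stepM n) x)
    (Measure.pi fun _ => driveM n)

/-- Law of the `(T+1)`-step path of the Gibbs sampler on `M_n` with initial distribution `μ`. -/
def pathM (n T : ℕ) (μ : Measure (Fin n × Fin 2 → ℝ)) :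
    Measure (Fin (T + 1) → Fin n × Fin 2 → ℝ) :=
  Measure.map (fun p : (Fin n × Fin 2 → ℝ) × (Fin T → (Fin n × Fin n) × ℝ) =>
      fun s : Fin (T + 1) => ((List.ofFn p.2).take s).foldl (stepM n) p.1)
    (μ.prod (Measure.pi fun _ => driveM n))

/-!
A row that has never been updated still carries its initial entry, so while some row is missing from
the updates, the chain sits in the set of matrices agreeing with the starting point in at least one
entry of the first column. Any two matrices in `MSet n` sharing a prescribed such entry differ by an
element of a linear space of dimension at most `n - 2`, so these matrices form a null set for the
`(n - 1)`-dimensional Hausdorff measure. The set of agreement therefore has mass at least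
`P[some row is missing]` under the law of the chain and mass `0` under `UM n`.
-/

section TotalVariation

variable {α : Type*} [MeasurableSpace α]

lemma sub_le_tvDist (μ ν : Measure α) [IsFiniteMeasure μ] {A : Set α} (hA : MeasurableSet A) :
    (μ A).toReal - (ν A).toReal ≤ tvDist μ ν := by
  have hbdd : BddAbove (Set.range fun B : {B : Set α // MeasurableSet B} =>
      (μ B).toReal - (ν B).toReal) := by
    refine ⟨(μ Set.univ).toReal, ?_⟩
    rintro _ ⟨B, rfl⟩
    calc (μ B).toReal - (ν B).toReal ≤ (μ B).toReal := sub_le_self _ ENNReal.toReal_nonneg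
      _ ≤ (μ Set.univ).toReal :=
        ENNReal.toReal_mono (measure_ne_top _ _) (measure_mono (Set.subset_univ _))
  exact le_ciSup hbdd ⟨A, hA⟩

lemma toReal_le_tvDist_of_null (μ : Measure α) {ν : Measure α} [IsFiniteMeasure μ] {A : Set α}
    (hA : MeasurableSet A) (hν : ν A = 0) : (μ A).toReal ≤ tvDist μ ν := by
  simpa only [hν, ENNReal.toReal_zero, sub_zero] using sub_le_tvDist μ ν hA

instance isFiniteMeasure_unifOn (s : Finset α) : IsFiniteMeasure (unifOn s) := by
  rcases s.eq_empty_or_nonempty with rfl | hs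
  · rw [unifOn, Finset.sum_empty, smul_zero]
    infer_instance
  · exact Measure.smul_finite _ (ENNReal.inv_ne_top.2 (Nat.cast_ne_zero.2 hs.card_ne_zero))

end TotalVariation

lemma measurable_foldl_ofFn {α β : Type*} [MeasurableSpace α] [MeasurableSpace β] {f : β → α → β}
    (hf : Measurable (Function.uncurry f)) (t : ℕ) :
    Measurable fun q : β × (Fin t → α) => (List.ofFn q.2).foldl f q.1 := by
  induction t with
  | zero => simpa only [List.ofFn_zero, List.foldl_nil] using measurable_fst
  | succ t ih =>
    simp only [List.ofFn_succ, List.foldl_cons]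
    have hfirst : Measurable fun q : β × (Fin (t + 1) → α) => f q.1 (q.2 0) :=
      hf.comp (measurable_fst.prodMk (by fun_prop))
    exact ih.comp (hfirst.prodMk (by fun_prop))

section GibbsStep

variable {n : ℕ}

lemma measurable_stepM_pair (ij : Fin n × Fin n) :
    Measurable fun q : (Fin n × Fin 2 → ℝ) × ℝ => stepM n q.1 (ij, q.2) := by
  have hδ : MeasurableSet {q : (Fin n × Fin 2 → ℝ) × ℝ |
      0 ≤ 2 - q.1 (ij.1, 0) - q.1 (ij.2, 0)} :=
    measurableSet_le measurable_const (by fun_prop)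
  refine measurable_pi_iff.2 fun p => ?_
  unfold stepM
  dsimp only
  split_ifs
  all_goals first | exact Measurable.ite hδ (by fun_prop) (by fun_prop) | fun_prop

lemma measurable_stepM : Measurable (Function.uncurry (stepM n)) := by
  have hpair : Measurable fun q : (Fin n × Fin n) × ((Fin n × Fin 2 → ℝ) × ℝ) =>
      stepM n q.2.1 (q.1, q.2.2) :=
    measurable_from_prod_countable_right measurable_stepM_pair
  have hreorder : Measurable fun q : (Fin n × Fin 2 → ℝ) × ((Fin n × Fin n) × ℝ) =>
      (q.2.1, (q.1, q.2.2)) := by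
    fun_prop
  exact hpair.comp hreorder

lemma stepM_apply_of_ne (x : Fin n × Fin 2 → ℝ) {u : (Fin n × Fin n) × ℝ} {i : Fin n}
    (hu : u.1.1 ≠ i ∧ u.1.2 ≠ i) (b : Fin 2) : stepM n x u (i, b) = x (i, b) := by
  simp [stepM, hu.1.symm, hu.2.symm]

lemma foldl_stepM_apply_of_forall_ne (x : Fin n × Fin 2 → ℝ) {l : List ((Fin n × Fin n) × ℝ)}
    {i : Fin n} (hl : ∀ u ∈ l, u.1.1 ≠ i ∧ u.1.2 ≠ i) (b : Fin 2) :
    l.foldl (stepM n) x (i, b) = x (i, b) :=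
  List.foldlRecOn (motive := fun y => y (i, b) = x (i, b)) l (stepM n) rfl
    fun y hy u hu => (stepM_apply_of_ne y (hl u hu) b).trans hy

instance isFiniteMeasure_driveM : IsFiniteMeasure (driveM n) := by
  unfold driveM
  infer_instance

end GibbsStep

lemma hausdorffMeasure_eq_zero_of_vsub_subset {V P : Type*} [NormedAddCommGroup V]
    [NormedSpace ℝ V] [MetricSpace P] [NormedAddTorsor V P] [MeasurableSpace P] [BorelSpace P]
    (W : Submodule ℝ V) [FiniteDimensional ℝ W] {s : Set P} (hs : s -ᵥ s ⊆ (W : Set V)) {d : ℝ}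
    (hd : (Module.finrank ℝ W : ℝ) < d) : μH[d] s = 0 := by
  borelize ↥W
  rcases s.eq_empty_or_nonempty with rfl | ⟨p, hp⟩
  · exact measure_empty
  have hiso : Isometry fun w : W => (w : V) +ᵥ p :=
    (IsometryEquiv.vaddConst p).isometry.comp isometry_subtype_coe
  have hsub : s ⊆ (fun w : W => (w : V) +ᵥ p) '' Set.univ := fun q hq =>
    ⟨⟨q -ᵥ p, hs (Set.vsub_mem_vsub hq hp)⟩, Set.mem_univ _, vsub_vadd q p⟩
  refine measure_mono_null hsub ?_
  rw [hiso.hausdorffMeasure_image (Or.inl ((Nat.cast_nonneg _).trans hd.le)),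
    Real.hausdorffMeasure_of_finrank_lt hd, Measure.coe_zero, Pi.zero_apply]

section SliceDirection

variable {ι K : Type*} [Fintype ι] [Field K]

variable (K) in
/-- The `ι × 2` matrices with zero row and column sums whose row `i` vanishes. It contains the
difference of any two matrices with the same margins and the same entry at `(i, 0)`. The second
column, being minus the first one, needs no condition of its own. -/
def sliceDirection (i : ι) : Submodule K (ι × Fin 2 → K) where
  carrier := {v | v (i, 0) = 0 ∧ (∀ j, v (j, 0) + v (j, 1) = 0) ∧ ∑ j, v (j, 0) = 0}
  zero_mem' := by simp
  add_mem' := by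
    rintro v w ⟨hvi, hvrow, hvcol⟩ ⟨hwi, hwrow, hwcol⟩
    refine ⟨by simp [hvi, hwi], fun j => ?_, by simp [Finset.sum_add_distrib, hvcol, hwcol]⟩
    simp only [Pi.add_apply]
    linear_combination hvrow j + hwrow j
  smul_mem' := by
    rintro c v ⟨hvi, hvrow, hvcol⟩
    refine ⟨by simp [hvi], fun j => ?_, by simp [← Finset.mul_sum, hvcol]⟩
    simp only [Pi.smul_apply, smul_eq_mul]
    linear_combination c * hvrow j

lemma eq_zero_of_mem_sliceDirection {i k : ι} {v : ι × Fin 2 → K} (hv : v ∈ sliceDirection K i)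
    (hzero : ∀ j, j ≠ i → j ≠ k → v (j, 0) = 0) : v = 0 := by
  obtain ⟨hi, hrow, hcol⟩ := hv
  have hne (j : ι) (hjk : j ≠ k) : v (j, 0) = 0 := by
    by_cases hji : j = i
    · exact hji ▸ hi
    · exact hzero j hji hjk
  have hfirst (j : ι) : v (j, 0) = 0 := by
    by_cases hjk : j = k
    · rwa [Fintype.sum_eq_single k hne, ← hjk] at hcol
    · exact hne j hjk
  have hsecond (j : ι) : v (j, 1) = 0 := by
    simpa only [hfirst j, zero_add] using hrow j
  exact funext (Prod.forall.2 fun j => Fin.forall_fin_two.2 ⟨hfirst j, hsecond j⟩)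

lemma finrank_sliceDirection_add_two_le [Nontrivial ι] (i : ι) :
    Module.finrank K (sliceDirection K i) + 2 ≤ Fintype.card ι := by
  classical
  obtain ⟨k, hki⟩ := exists_ne i
  let restrict : sliceDirection K i →ₗ[K] ((({i, k} : Finset ι)ᶜ : Finset ι) → K) :=
    (LinearMap.funLeft K K fun j => (j.1, 0)).domRestrict (sliceDirection K i)
  have hinj : Function.Injective restrict := by
    refine (injective_iff_map_eq_zero restrict).2 fun v hv => Subtype.ext ?_
    refine eq_zero_of_mem_sliceDirection (k := k) v.2 fun j hji hjk => ?_
    exact congrFun hv ⟨j, by simp [hji, hjk]⟩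
  calc Module.finrank K (sliceDirection K i) + 2
      ≤ (({i, k} : Finset ι)ᶜ).card + ({i, k} : Finset ι).card := by
        rw [Finset.card_pair hki.symm, ← Fintype.card_coe, ← Module.finrank_fintype_fun_eq_card K]
        exact Nat.add_le_add_right (LinearMap.finrank_le_finrank_of_injective hinj) 2
    _ = Fintype.card ι := Finset.card_compl_add_card _

end SliceDirection

section Slices

variable {n : ℕ}

lemma sub_mem_sliceDirection {y z : Fin n × Fin 2 → ℝ} (hy : y ∈ MSet n) (hz : z ∈ MSet n)
    {i : Fin n} (hi : y (i, 0) = z (i, 0)) : y - z ∈ sliceDirection ℝ i := by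
  obtain ⟨-, hyrow, hycol⟩ := hy
  obtain ⟨-, hzrow, hzcol⟩ := hz
  refine ⟨sub_eq_zero.2 hi, fun j => ?_, ?_⟩
  · simp only [Pi.sub_apply]
    linear_combination hyrow j - hzrow j
  · simp only [Pi.sub_apply, Finset.sum_sub_distrib, hycol, hzcol, sub_self]

lemma hausdorffMeasure_slice_eq_zero (hn : 2 ≤ n) (i : Fin n) (c : ℝ) :
    μH[(n : ℝ) - 1] ({y | y (i, 0) = c} ∩ MSet n) = 0 := by
  have : Nontrivial (Fin n) := Fin.nontrivial_iff_two_le.2 hn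
  refine hausdorffMeasure_eq_zero_of_vsub_subset (sliceDirection ℝ i) ?_ ?_
  · exact Set.vsub_subset_iff.2 fun y ⟨hyc, hy⟩ z ⟨hzc, hz⟩ =>
      sub_mem_sliceDirection hy hz (hyc.trans hzc.symm)
  · have hrank : (Module.finrank ℝ (sliceDirection ℝ i) : ℝ) + 2 ≤ n := by
      exact_mod_cast (finrank_sliceDirection_add_two_le i).trans_eq (Fintype.card_fin n)
    linarith

lemma measurableSet_exists_apply_eq (c : Fin n → ℝ) :
    MeasurableSet {y : Fin n × Fin 2 → ℝ | ∃ i, y (i, 0) = c i} := by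
  rw [Set.ofPred_exists]
  exact MeasurableSet.iUnion fun i => measurableSet_eq_fun (by fun_prop) measurable_const

lemma UM_exists_apply_eq (hn : 2 ≤ n) (c : Fin n → ℝ) : UM n {y | ∃ i, y (i, 0) = c i} = 0 := by
  rw [UM, Measure.smul_apply, Measure.restrict_apply (measurableSet_exists_apply_eq c),
    Set.ofPred_exists, Set.iUnion_inter,
    measure_iUnion_null fun i => hausdorffMeasure_slice_eq_zero hn i (c i), smul_zero]

end Slices

theorem gibbs_sampler_narrow_matrices_coupon_lower_bound_general
    (n : ℕ) (hn : 2 ≤ n) (x : Fin n × Fin 2 → ℝ) (t : ℕ)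
    (P : Measure (Fin t → (Fin n × Fin n) × ℝ)) [IsFiniteMeasure P] :
    (P {ω | ∃ i : Fin n, ∀ s : Fin t, (ω s).1.1 ≠ i ∧ (ω s).1.2 ≠ i}).toReal ≤
      tvDist (P.map fun ω => (List.ofFn ω).foldl (stepM n) x) (UM n) := by
  have hmeas : Measurable fun ω : Fin t → (Fin n × Fin n) × ℝ =>
      (List.ofFn ω).foldl (stepM n) x :=
    (measurable_foldl_ofFn measurable_stepM t).comp measurable_prodMk_left
  have hA := measurableSet_exists_apply_eq fun i => x (i, 0)
  refine le_trans ?_ (toReal_le_tvDist_of_null _ hA (UM_exists_apply_eq hn _))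
  rw [Measure.map_apply hmeas hA]
  refine ENNReal.toReal_mono (measure_ne_top _ _) (measure_mono ?_)
  rintro ω ⟨i, hi⟩
  exact ⟨i, foldl_stepM_apply_of_forall_ne x (List.forall_mem_ofFn_iff.2 hi) 0⟩

/-- Coupon-collector lower bound for the Gibbs sampler on narrow matrices:
the total variation distance to stationarity at time `t` is at least the probability
that some row index has not yet been chosen in any update pair before time `t`. -/
theorem gibbs_sampler_narrow_matrices_coupon_lower_bound
    (n : ℕ) (hn : 2 ≤ n) (x : Fin n × Fin 2 → ℝ) (hx : x ∈ MSet n) (t : ℕ) :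
    ((Measure.pi fun _ : Fin t => driveM n)
        {ω | ∃ i : Fin n, ∀ s : Fin t, (ω s).1.1 ≠ i ∧ (ω s).1.2 ≠ i}).toReal ≤
      tvDist (lawM n x t) (UM n) :=
  gibbs_sampler_narrow_matrices_coupon_lower_bound_general n hn x t _

end
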